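/- arXiv:quant-ph/0412028 — 6 statements merged into one kernel-verified Lean document; each statement's English description precedes it below -/
import Mathlib

section
/- Let S be a finite nonempty set and let p, p' : S → ℝ be probability vectors on S (nonnegative entries summing to 1) such that 0 < p'_i ≤ 1/2 for every i ∈ S. Then H(p) ≥ H(p') - ∑_{i∈S} log(1/p'_i)·|p_i - p'_i|, where H(q) = -∑_{i} q_i log q_i denotes Shannon entropy with the convention 0·log 0 = 0 and log denoting the natural logarithm. -/
open scoped BigOperators

/-! The inequality holds term by term. Write `η x = -x log x` and `L = log (1/q)`, where `q = p'ᵢ`.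
If `x ≤ q`, then `η x - η q + L (q - x) = x log (q/x) ≥ 0`. If `q ≤ x ≤ 1`, then
`η x - η q + L (x - q)` is concave in `x`, vanishes at `x = q`, and equals `L (1 - 2q) ≥ 0` at
`x = 1`; hence it is nonnegative on `[q, 1]`. -/

theorem negMulLog_sub_le {x q : ℝ} (hx0 : 0 ≤ x) (hx1 : x ≤ 1) (hq0 : 0 < q) (hq : q ≤ 1 / 2) :
    -(q * Real.log q) - Real.log (1 / q) * |x - q| ≤ -(x * Real.log x) := by
  have hL : Real.log q ≤ 0 := Real.log_nonpos hq0.le (by linarith)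
  rw [one_div, Real.log_inv]
  rcases le_total x q with h | h
  · rw [abs_of_nonpos (by linarith)]
    have key : x * Real.log x ≤ x * Real.log q := by
      rcases hx0.eq_or_lt with rfl | hx
      · simp
      · exact mul_le_mul_of_nonneg_left (Real.log_le_log hx h) hx0
    nlinarith
  · rw [abs_of_nonneg (by linarith)]
    have h1q : 0 < 1 - q := by linarith
    -- Concavity at `x = ((1 - x)/(1 - q)) q + ((x - q)/(1 - q)) 1`.
    have hc := Real.concaveOn_negMulLog.2 (Set.mem_Ici.2 hq0.le) (Set.mem_Ici.2 zero_le_one)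
      (div_nonneg (sub_nonneg.2 hx1) h1q.le) (div_nonneg (sub_nonneg.2 h) h1q.le)
      (by field_simp; ring)
    have hx : (1 - x) / (1 - q) * q + (x - q) / (1 - q) * 1 = x := by field_simp; ring
    simp only [smul_eq_mul, hx, Real.negMulLog_one, mul_zero, add_zero] at hc
    simp only [Real.negMulLog] at hc
    have hd : (1 - x) / (1 - q) * (-q * Real.log q)
        - (-(q * Real.log q) - -Real.log q * (x - q))
        = -Real.log q * ((x - q) * (1 - 2 * q) / (1 - q)) := by field_simp; ring
    have hnn : 0 ≤ -Real.log q * ((x - q) * (1 - 2 * q) / (1 - q)) :=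
      mul_nonneg (by linarith)
        (div_nonneg (mul_nonneg (by linarith) (by linarith)) h1q.le)
    linarith

/-- For probability vectors `p, p'` on a finite nonempty set `S`
with `0 < p'ᵢ ≤ 1/2` for all `i`, the Shannon entropy satisfies
`H(p) ≥ H(p') - ∑ᵢ log(1/p'ᵢ) * |pᵢ - p'ᵢ|`.
(Entropy `H(q) = -∑ᵢ qᵢ log qᵢ`; the convention `0 * log 0 = 0` holds since
`Real.log 0 = 0` in Mathlib.) -/
theorem entropy_lower_bound {S : Type*} [Fintype S] [Nonempty S]
    (p p' : S → ℝ)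
    (hp : ∀ i, 0 ≤ p i) (hpsum : ∑ i, p i = 1)
    (hp'pos : ∀ i, 0 < p' i) (hp'half : ∀ i, p' i ≤ 1 / 2)
    (hp'sum : ∑ i, p' i = 1) :
    (-∑ i, p i * Real.log (p i)) ≥
      (-∑ i, p' i * Real.log (p' i)) - ∑ i, Real.log (1 / p' i) * |p i - p' i| := by
  rw [ge_iff_le, ← Finset.sum_neg_distrib, ← Finset.sum_neg_distrib, ← Finset.sum_sub_distrib]
  refine Finset.sum_le_sum fun i _ => negMulLog_sub_le (hp i) ?_ (hp'pos i) (hp'half i)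
  exact hpsum ▸ Finset.single_le_sum (fun j _ => hp j) (Finset.mem_univ i)
end

section
/- Let S and E be finite nonempty sets and let q : S × E → ℝ be a joint probability distribution (nonnegative entries summing to 1). Let p_s = ∑_e q(s,e) and p(e) = ∑_s q(s,e) be the marginals, and suppose 0 < p_s ≤ 1/2 for every s ∈ S. Let p(e|s) = q(s,e)/p_s. Then the mutual information I(S;E) = ∑_{s,e} q(s,e) · log( q(s,e) / (p_s · p(e)) ) satisfies I(S;E) ≤ ∑_s p_s log(1/p_s) ∑_e |p(e|s) - p(e)|. -/
open scoped BigOperators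

/-!
The bound holds separately for each `s`. Write `p = ps s`, `L = log (1 / p)` and
`r e = q (s, e) / (ps s * pe e)`; then `0 ≤ r e ≤ 1 / p` because `q (s, e) ≤ pe e`, and the `pe`-mean
of `r` is `1`. On `[1, 1 / p]` the convex function `r log r` lies below its chord, of slope
`L / (1 - p) = L + c` with `c = L * p / (1 - p)`; on `[0, 1]` it is nonpositive, hence below
`(L - c) * (1 - r)`, where `c ≤ L` is exactly `p ≤ 1 / 2`. Thus `r log r ≤ L * |r - 1| + c * (r - 1)`
throughout (`mul_log_le_abs_add`), and the linear correction averages to zero over `e`.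
-/

lemma mul_log_le_abs_add {p r : ℝ} (hp : 0 < p) (hp2 : p ≤ 1 / 2) (hr : 0 ≤ r) (hrp : r ≤ 1 / p) :
    r * Real.log r ≤ Real.log (1 / p) * |r - 1| + Real.log (1 / p) * p / (1 - p) * (r - 1) := by
  have hL : 0 ≤ Real.log (1 / p) := Real.log_nonneg (by rw [le_div_iff₀ hp]; linarith)
  have h1p : 0 < 1 - p := by linarith
  rcases le_total r 1 with h | h
  · rw [abs_of_nonpos (by linarith)]
    have h0 : r * Real.log r ≤ 0 := Real.mul_log_nonpos hr h
    have hc : Real.log (1 / p) * p / (1 - p) ≤ Real.log (1 / p) := by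
      rw [div_le_iff₀ h1p]
      exact mul_le_mul_of_nonneg_left (by linarith) hL
    nlinarith
  · rw [abs_of_nonneg (by linarith)]
    have hrp' : r * p ≤ 1 := by rwa [le_div_iff₀ hp] at hrp
    -- `r` as a convex combination of the endpoints `1` and `1 / p` of the chord
    have ht1 : 0 ≤ 1 - (r - 1) * p / (1 - p) := by
      rw [sub_nonneg, div_le_one h1p]
      linarith
    have ht0 : 0 ≤ (r - 1) * p / (1 - p) :=
      div_nonneg (mul_nonneg (by linarith) hp.le) h1p.le
    have hconv := Real.convexOn_mul_log.2 (Set.mem_Ici.2 zero_le_one)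
      (Set.mem_Ici.2 (one_div_pos.2 hp).le) ht1 ht0 (by ring)
    simp only [smul_eq_mul, Real.log_one, mul_zero, zero_add] at hconv
    have hcomb : (1 - (r - 1) * p / (1 - p)) * 1 + (r - 1) * p / (1 - p) * (1 / p) = r := by
      field_simp
      ring
    rw [hcomb] at hconv
    refine hconv.trans (le_of_eq ?_)
    generalize Real.log (1 / p) = L
    field_simp
    ring

/-- The pointwise bound `mul_log_le_abs_add` at `r = a / (p * b)`, multiplied by `p * b`. -/
lemma mul_log_div_le {p a b : ℝ} (hp : 0 < p) (hp2 : p ≤ 1 / 2) (ha : 0 ≤ a) (hab : a ≤ b) :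
    a * Real.log (a / (p * b)) ≤ p * Real.log (1 / p) * |a / p - b| +
      Real.log (1 / p) * p / (1 - p) * (a - p * b) := by
  rcases (ha.trans hab).eq_or_lt with hb | hb
  · have ha0 : a = 0 := by linarith
    simp [ha0, ← hb]
  · have hpb : 0 < p * b := mul_pos hp hb
    have key := mul_log_le_abs_add (r := a / (p * b)) hp hp2 (by positivity)
      (by rw [div_le_div_iff₀ hpb hp]; nlinarith)
    have h := mul_le_mul_of_nonneg_left key hpb.le
    have habs : |a / p - b| = b * |a / (p * b) - 1| := by
      rw [← abs_of_pos hb, ← abs_mul, abs_of_pos hb]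
      congr 1
      field_simp
    have e1 : p * b * (a / (p * b)) = a := by field_simp
    have e2 : p * b * (a / (p * b) - 1) = a - p * b := by rw [mul_sub, e1, mul_one]
    rw [← mul_assoc, e1] at h
    rw [habs, ← e2]
    refine h.trans (le_of_eq ?_)
    ring

/-- For a joint probability distribution `q` on `S × E` with
marginals `ps`, `pe`, and `0 < ps s ≤ 1/2` for every `s`, the mutual information
`I(S;E) = ∑_{s,e} q(s,e) log( q(s,e) / (ps s * pe e) )` is bounded by
`∑_s ps s * log(1/ps s) * ∑_e |p(e|s) - pe e|` where `p(e|s) = q(s,e)/ps s`.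
(Terms with `q(s,e) = 0` contribute `0`, which holds automatically since they are
multiplied by `q(s,e)`.) -/
theorem mutual_info_le_of_half {S E : Type*} [Fintype S] [Fintype E]
    [Nonempty S] [Nonempty E]
    (q : S × E → ℝ) (hq : ∀ x, 0 ≤ q x) (hqsum : ∑ x, q x = 1)
    (ps : S → ℝ) (pe : E → ℝ)
    (hps : ∀ s, ps s = ∑ e, q (s, e))
    (hpe : ∀ e, pe e = ∑ s, q (s, e))
    (hpos : ∀ s, 0 < ps s) (hhalf : ∀ s, ps s ≤ 1 / 2) :
    ∑ s, ∑ e, q (s, e) * Real.log (q (s, e) / (ps s * pe e)) ≤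
      ∑ s, ps s * Real.log (1 / ps s) * ∑ e, |q (s, e) / ps s - pe e| := by
  refine Finset.sum_le_sum fun s _ => ?_
  have hqe : ∀ e, q (s, e) ≤ pe e := fun e => by
    rw [hpe]
    exact Finset.single_le_sum (f := fun t => q (t, e)) (fun t _ => hq _) (Finset.mem_univ s)
  have hpe1 : ∑ e, pe e = 1 := by
    simp only [hpe]
    rw [← hqsum, Fintype.sum_prod_type_right]
  have hzero : ∑ e, (q (s, e) - ps s * pe e) = 0 := by
    rw [Finset.sum_sub_distrib, ← Finset.mul_sum, hpe1, ← hps]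
    ring
  calc ∑ e, q (s, e) * Real.log (q (s, e) / (ps s * pe e))
      ≤ ∑ e, (ps s * Real.log (1 / ps s) * |q (s, e) / ps s - pe e| +
          Real.log (1 / ps s) * ps s / (1 - ps s) * (q (s, e) - ps s * pe e)) :=
        Finset.sum_le_sum fun e _ => mul_log_div_le (hpos s) (hhalf s) (hq _) (hqe e)
    _ = ps s * Real.log (1 / ps s) * ∑ e, |q (s, e) / ps s - pe e| := by
        rw [Finset.sum_add_distrib, ← Finset.mul_sum, ← Finset.mul_sum, hzero, mul_zero, add_zero]
end

section
/- Let n ≥ 2, let ρ_1, …, ρ_n be d×d density matrices each occurring with probability 1/n, and let ρ = (1/n)∑_s ρ_s. For any POVM (E_e)_{e∈F} on ℂ^d, with p(e|s) = Tr(E_e ρ_s) and p(e) = (1/n)∑_s p(e|s), the mutual information I(S;E) = ∑_{s,e} (1/n) p(e|s) log( p(e|s)/p(e) ) satisfies I(S;E) ≤ (log n) · (1/n) ∑_s ‖ρ_s - ρ‖₁. -/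
/-!
The bound holds outcome by outcome on the classical side. For a fixed outcome `e` put
`x_s = p(e|s) / p(e)`, so that `0 ≤ x_s ≤ n` and `∑ x_s = n`. On `[0, 1]` one has `x log x ≤ 0`,
and on `[1, n]` convexity bounds `x log x` by its chord, of slope `n log n / (n - 1) ≤ 2 log n`.
Hence `x log x ≤ log n (|x - 1| + (x - 1))` throughout (`mul_log_div_le`), and the linear term
vanishes on summing over `s`, leaving `log n ∑_s |p(e|s) - p(e)|`.

Since `p(e|s) - p(e) = Tr (E_e (ρ_s - ρ))`, it remains to see that a measurement does not increase
the trace norm: `∑_e |Tr (E_e A)| ≤ ‖A‖₁` for Hermitian `A` (`sum_abs_trace_le_traceNorm`). In an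
eigenbasis of `A`, `Tr (E_e A) = ∑_i λ_i (U* E_e U)_ii`, with nonnegative weights that sum to `1`
over `e`.
-/

open scoped BigOperators ComplexOrder

/-- The trace norm of a matrix: for a Hermitian matrix it is the sum of the
absolute values of its (real) eigenvalues; we set it to `0` otherwise. -/
noncomputable def traceNorm {ι : Type*} [Fintype ι] [DecidableEq ι]
    (A : Matrix ι ι ℂ) : ℝ :=
  letI := Classical.dec A.IsHermitian
  if h : A.IsHermitian then ∑ i, |h.eigenvalues i| else 0

/-- The chord of `x ↦ x log x` on `[1, n]`, of slope `n log n / (n - 1) ≤ 2 log n`. -/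
lemma mul_log_le_chord {n x : ℝ} (hn : 2 ≤ n) (h1 : 1 ≤ x) (hx : x ≤ n) :
    x * Real.log x ≤ 2 * Real.log n * (x - 1) := by
  have hlog : 0 ≤ Real.log n := Real.log_nonneg (by linarith)
  have hn1 : 0 < n - 1 := by linarith
  have h := Real.convexOn_mul_log.2 (Set.mem_Ici.2 zero_le_one)
    (Set.mem_Ici.2 (by linarith : 0 ≤ n))
    (div_nonneg (by linarith : 0 ≤ n - x) hn1.le)
    (div_nonneg (by linarith : 0 ≤ x - 1) hn1.le)
    (by field_simp; ring)
  have e : ((n - x) / (n - 1)) • (1 : ℝ) + ((x - 1) / (n - 1)) • n = x := by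
    simp only [smul_eq_mul]; field_simp; ring
  rw [e] at h
  simp only [smul_eq_mul, Real.log_one, mul_zero, zero_add] at h
  refine h.trans ?_
  rw [div_mul_eq_mul_div, div_le_iff₀ hn1]
  nlinarith [mul_nonneg (mul_nonneg hlog (by linarith : 0 ≤ x - 1)) (by linarith : 0 ≤ n - 2)]

lemma mul_log_div_le_s5 {n a q : ℝ} (hn : 2 ≤ n) (ha : 0 ≤ a) (haq : a ≤ n * q) :
    a * Real.log (a / q) ≤ Real.log n * (|a - q| + (a - q)) := by
  have hlog : 0 ≤ Real.log n := Real.log_nonneg (by linarith)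
  have hr : 0 ≤ Real.log n * (|a - q| + (a - q)) :=
    mul_nonneg hlog (by linarith [neg_abs_le (a - q)])
  have hq : 0 ≤ q := by by_contra! h; nlinarith
  rcases hq.eq_or_lt with rfl | hq
  · simpa using hr
  rcases le_total a q with h | h
  · exact (mul_nonpos_of_nonneg_of_nonpos ha
      (Real.log_nonpos (div_nonneg ha hq.le) ((div_le_one hq).2 h))).trans hr
  · have := mul_log_le_chord hn ((one_le_div hq).2 h) ((div_le_iff₀ hq).2 haq)
    rw [abs_of_nonneg (by linarith)]
    have h2 := mul_le_mul_of_nonneg_left this hq.le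
    have e1 : q * (a / q * Real.log (a / q)) = a * Real.log (a / q) := by field_simp
    have e2 : q * (2 * Real.log n * (a / q - 1)) = Real.log n * (a - q + (a - q)) := by
      field_simp; ring
    rwa [e1, e2] at h2

open scoped MatrixOrder in
lemma trace_mul_nonneg {d : ℕ} {A B : Matrix (Fin d) (Fin d) ℂ}
    (hA : A.PosSemidef) (hB : B.PosSemidef) : 0 ≤ ((A * B).trace).re := by
  obtain ⟨C, rfl⟩ := CStarAlgebra.nonneg_iff_eq_star_mul_self.1 hB.nonneg
  rw [← Matrix.mul_assoc, Matrix.trace_mul_comm, ← Matrix.mul_assoc]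
  exact (Complex.le_def.1 (hA.mul_mul_conjTranspose_same C).trace_nonneg).1

/-- Measuring a Hermitian matrix with a POVM does not increase its trace norm. -/
lemma sum_abs_trace_le_traceNorm {d : ℕ} {F : Type*} [Fintype F]
    {A : Matrix (Fin d) (Fin d) ℂ} (hA : A.IsHermitian)
    (E : F → Matrix (Fin d) (Fin d) ℂ)
    (hE : ∀ e, (E e).PosSemidef) (hEsum : ∑ e, E e = 1) :
    ∑ e, |((E e * A).trace).re| ≤ traceNorm A := by
  rw [traceNorm, dif_pos hA]
  set U : Matrix (Fin d) (Fin d) ℂ := hA.eigenvectorUnitary.1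
  -- `w e i` is the probability of outcome `e` in the `i`-th eigenstate of `A`.
  let w : F → Fin d → ℝ := fun e i => ((U.conjTranspose * E e * U) i i).re
  have hw : ∀ e i, 0 ≤ w e i := fun e i =>
    (Complex.le_def.1 ((hE e).conjTranspose_mul_mul_same U).diag_nonneg).1
  have hUU : U.conjTranspose * U = 1 := Unitary.coe_star_mul_self hA.eigenvectorUnitary
  have hw1 : ∀ i, ∑ e, w e i = 1 := fun i => by
    have : ∑ e, U.conjTranspose * E e * U = 1 := by
      rw [← Finset.sum_mul, ← Finset.mul_sum, hEsum, Matrix.mul_one, hUU]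
    have h := congrArg (fun M : Matrix (Fin d) (Fin d) ℂ => (M i i).re) this
    simpa [w, Matrix.sum_apply] using h
  have htr : ∀ e, ((E e * A).trace).re = ∑ i, w e i * hA.eigenvalues i := fun e => by
    have hs : A = U * Matrix.diagonal (fun i => (hA.eigenvalues i : ℂ)) * U.conjTranspose := by
      have := hA.spectral_theorem
      rw [Unitary.conjStarAlgAut_apply] at this
      exact this
    have h2 : (E e * A).trace = ((U.conjTranspose * E e * U) *
        Matrix.diagonal (fun i => (hA.eigenvalues i : ℂ))).trace := by
      conv_lhs => rw [hs]
      rw [← Matrix.mul_assoc, Matrix.trace_mul_comm]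
      simp only [Matrix.mul_assoc]
    rw [h2, Matrix.trace]
    simp [Matrix.mul_diagonal, w]
  calc ∑ e, |((E e * A).trace).re| ≤ ∑ e, ∑ i, w e i * |hA.eigenvalues i| := by
        refine Finset.sum_le_sum fun e _ => ?_
        rw [htr]
        refine (Finset.abs_sum_le_sum_abs _ _).trans (le_of_eq ?_)
        exact Finset.sum_congr rfl fun i _ => by rw [abs_mul, abs_of_nonneg (hw e i)]
    _ = ∑ i, |hA.eigenvalues i| := by
        rw [Finset.sum_comm]
        exact Finset.sum_congr rfl fun i _ => by rw [← Finset.sum_mul, hw1, one_mul]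

/-- If a source emits one of `n ≥ 2` density matrices `ρ_s`,
each with probability `1/n`, then for any POVM `(E_e)`, with
`p(e|s) = Tr(E_e ρ_s)` and `p(e) = (1/n) ∑_s p(e|s)`, the mutual information
satisfies `I(S;E) ≤ (log n) (1/n) ∑_s ‖ρ_s - ρ‖₁` where `ρ = (1/n) ∑_s ρ_s`. -/
theorem mutual_info_le_traceNorm_uniform {n d : ℕ} (hn : 2 ≤ n)
    {F : Type*} [Fintype F]
    (ρ : Fin n → Matrix (Fin d) (Fin d) ℂ)
    (hρ : ∀ s, (ρ s).PosSemidef) (hρtr : ∀ s, (ρ s).trace = 1)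
    (E : F → Matrix (Fin d) (Fin d) ℂ)
    (hE : ∀ e, (E e).PosSemidef) (hEsum : ∑ e, E e = 1) :
    ∑ s, ∑ e, (1 / n : ℝ) * ((E e * ρ s).trace).re *
        Real.log (((E e * ρ s).trace).re /
          ((1 / n : ℝ) * ∑ s', ((E e * ρ s').trace).re)) ≤
      Real.log n * ((1 / n : ℝ) *
        ∑ s, traceNorm (ρ s - (1 / n : ℂ) • ∑ s', ρ s')) := by
  have hnR : (2 : ℝ) ≤ n := by exact_mod_cast hn
  have hn0 : (n : ℝ) ≠ 0 := by positivity
  set R : Matrix (Fin d) (Fin d) ℂ := (1 / n : ℂ) • ∑ s', ρ s' with hR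
  let p : F → Fin n → ℝ := fun e s => ((E e * ρ s).trace).re
  let q : F → ℝ := fun e => (1 / n : ℝ) * ∑ s, p e s
  have hp : ∀ e s, 0 ≤ p e s := fun e s => trace_mul_nonneg (hE e) (hρ s)
  have hnq : ∀ e, (n : ℝ) * q e = ∑ s, p e s := fun e => by simp only [q]; field_simp
  have hpq : ∀ e s, p e s ≤ n * q e := fun e s => by
    rw [hnq]
    exact Finset.single_le_sum (f := p e) (fun s _ => hp e s) (Finset.mem_univ s)
  have hdiff : ∀ e s, ((E e * (ρ s - R)).trace).re = p e s - q e := fun e s => by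
    have h1 : (1 / n : ℂ) = ((1 / n : ℝ) : ℂ) := by push_cast; rfl
    rw [Matrix.mul_sub, Matrix.trace_sub, Complex.sub_re, hR, Matrix.mul_smul, Matrix.mul_sum,
      Matrix.trace_smul, Matrix.trace_sum, smul_eq_mul, h1, Complex.re_ofReal_mul, Complex.re_sum]
  have hherm : ∀ s, (ρ s - R).IsHermitian := fun s => by
    refine (hρ s).1.sub ?_
    rw [hR, Matrix.IsHermitian, Matrix.conjTranspose_smul, Matrix.conjTranspose_sum]
    simp [fun s => (hρ s).1.eq]
  have hout : ∀ e, ∑ s, p e s * Real.log (p e s / q e) ≤ Real.log n * ∑ s, |p e s - q e| :=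
    fun e => by
      refine (Finset.sum_le_sum fun s _ => mul_log_div_le_s5 hnR (hp e s) (hpq e s)).trans ?_
      -- the linear terms `p e s - q e` cancel
      rw [← Finset.mul_sum, Finset.sum_add_distrib, Finset.sum_sub_distrib, ← hnq]
      simp
  calc _ = (1 / n : ℝ) * ∑ e, ∑ s, p e s * Real.log (p e s / q e) := by
        rw [Finset.sum_comm]
        simp only [Finset.mul_sum, mul_assoc, p, q]
    _ ≤ (1 / n : ℝ) * ∑ e, Real.log n * ∑ s, |p e s - q e| := by
        gcongr with e
        exact hout e
    _ = Real.log n * ((1 / n : ℝ) * ∑ s, ∑ e, |((E e * (ρ s - R)).trace).re|) := by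
        simp only [hdiff]
        rw [← Finset.mul_sum, Finset.sum_comm]
        ring
    _ ≤ _ := by
        have : 0 ≤ Real.log n := Real.log_nonneg (by linarith)
        gcongr with s
        exact sum_abs_trace_le_traceNorm (hherm s) E hE hEsum
end

section
/- Let S be a binary random variable taking values 0 and 1 with probabilities p₀ and p₁ where p₀ ≥ p₁ > 0, p₀ + p₁ = 1, and let E be a finite set of outcomes with conditional distributions p(e|0), p(e|1) (nonnegative, each summing over e to 1); set p(e) = p₀ p(e|0) + p₁ p(e|1). Then the mutual information I(E;S) = ∑_{s∈{0,1}} ∑_e p_s p(e|s) log( p(e|s)/p(e) ) satisfies I(E;S) ≤ H(S) · p₀ · ∑_e |p(e|1) - p(e|0)|, where H(S) = -p₀ log p₀ - p₁ log p₁. -/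
/-!
The contribution of one outcome to `I(E;S)`, as a function of `(a, b) = (p(e|0), p(e|1))`, is convex
and homogeneous of degree one, and vanishes at `(1, 1)`. If `b ≤ a`, then
`(a, b) = b • (1, 1) + (a - b) • (1, 0)`, so the contribution is at most `(a - b) (-p₀ log p₀)`;
symmetrically it is at most `(b - a) (-p₁ log p₁)` if `a ≤ b` (`contribution_le`). As `p(·|0)` and
`p(·|1)` have the same total mass, both `∑ (a - b)⁺` and `∑ (b - a)⁺` equal `½ ∑ |a - b|`, so that
`I(E;S) ≤ ½ H(S) ∑ |a - b|`. The theorem follows since `p₀ ≥ ½` and `H(S) ≥ 0`.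
-/

open scoped BigOperators

/-- The bound on the contribution of a single outcome that is at least as likely under the symbol of
prior probability `p` (conditional probability `a`) as under the other one (`b`). -/
lemma contribution_le {p r a b : ℝ} (hp : 0 < p) (hr : 0 < r) (hpr : p + r = 1)
    (hb : 0 ≤ b) (hab : b ≤ a) :
    p * a * Real.log (a / (p * a + r * b)) + r * b * Real.log (b / (p * a + r * b)) ≤
      (a - b) * (-(p * Real.log p)) := by
  rcases (hb.trans hab).eq_or_lt with ha | ha
  · have hb0 : b = 0 := by linarith
    simp [← ha, hb0]
  obtain rfl : r = 1 - p := by linarith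
  have hm : 0 < p * a + (1 - p) * b := by positivity
  -- concavity of `log` at the points `1` and `p` with weights `b / a` and `(a - b) / a`
  have hconc := strictConcaveOn_log_Ioi.concaveOn.2 (Set.mem_Ioi.2 one_pos) (Set.mem_Ioi.2 hp)
    (div_nonneg hb ha.le) (div_nonneg (sub_nonneg.2 hab) ha.le) (by field_simp; ring)
  simp only [smul_eq_mul, Real.log_one, mul_zero, zero_add] at hconc
  have hmix : b / a * 1 + (a - b) / a * p = (p * a + (1 - p) * b) / a := by
    field_simp
    ring
  rw [hmix, ← inv_div a (p * a + (1 - p) * b), Real.log_inv] at hconc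
  have h1 : a * Real.log (a / (p * a + (1 - p) * b)) ≤ -((a - b) * Real.log p) := by
    have h := mul_le_mul_of_nonneg_left hconc ha.le
    have e : a * ((a - b) / a * Real.log p) = (a - b) * Real.log p := by field_simp
    linarith
  have h2 : Real.log (b / (p * a + (1 - p) * b)) ≤ 0 := by
    apply Real.log_nonpos (by positivity)
    rw [div_le_one hm]
    nlinarith
  have h3 := mul_nonpos_of_nonneg_of_nonpos (mul_nonneg hr.le hb) h2
  have h4 := mul_le_mul_of_nonneg_left h1 hp.le
  linarith

/-- For a binary source `S` with probabilities `p₀ ≥ p₁ > 0`,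
`p₀ + p₁ = 1`, and conditional outcome distributions `q₀ = p(·|0)`, `q₁ = p(·|1)`
on a finite set `E`, the mutual information satisfies
`I(E;S) ≤ H(S) p₀ ∑_e |p(e|1) - p(e|0)|`, with `H(S) = -p₀ log p₀ - p₁ log p₁`
and `p(e) = p₀ q₀ e + p₁ q₁ e`. -/
theorem binary_mutual_info_bound {E : Type*} [Fintype E]
    (p0 p1 : ℝ) (hp1pos : 0 < p1) (hle : p1 ≤ p0) (hsum : p0 + p1 = 1)
    (q0 q1 : E → ℝ)
    (hq0 : ∀ e, 0 ≤ q0 e) (hq1 : ∀ e, 0 ≤ q1 e)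
    (hq0sum : ∑ e, q0 e = 1) (hq1sum : ∑ e, q1 e = 1) :
    (∑ e, p0 * q0 e * Real.log (q0 e / (p0 * q0 e + p1 * q1 e)) +
        ∑ e, p1 * q1 e * Real.log (q1 e / (p0 * q0 e + p1 * q1 e))) ≤
      (-(p0 * Real.log p0) - p1 * Real.log p1) * p0 * ∑ e, |q1 e - q0 e| := by
  have hp0pos : 0 < p0 := hp1pos.trans_le hle
  have hA : p0 * Real.log p0 ≤ 0 := mul_nonpos_of_nonneg_of_nonpos hp0pos.le
    (Real.log_nonpos hp0pos.le (by linarith))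
  have hB : p1 * Real.log p1 ≤ 0 := mul_nonpos_of_nonneg_of_nonpos hp1pos.le
    (Real.log_nonpos hp1pos.le (by linarith))
  set A := -(p0 * Real.log p0) with hAdef
  set B := -(p1 * Real.log p1) with hBdef
  -- `(A + B) / 2 * |q₁ - q₀| + (B - A) / 2 * (q₁ - q₀)` is `A (q₀ - q₁)⁺ + B (q₁ - q₀)⁺`
  have key : ∀ e, p0 * q0 e * Real.log (q0 e / (p0 * q0 e + p1 * q1 e)) +
      p1 * q1 e * Real.log (q1 e / (p0 * q0 e + p1 * q1 e)) ≤
      (A + B) / 2 * |q1 e - q0 e| + (B - A) / 2 * (q1 e - q0 e) := by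
    intro e
    rcases le_total (q1 e) (q0 e) with h | h
    · have := contribution_le hp0pos hp1pos hsum (hq1 e) h
      rw [← hAdef] at this
      rw [abs_of_nonpos (by linarith)]
      linarith
    · have := contribution_le hp1pos hp0pos (by linarith) (hq0 e) h
      rw [← hBdef, add_comm (p1 * q1 e) (p0 * q0 e)] at this
      rw [abs_of_nonneg (by linarith)]
      linarith
  have hS := Finset.sum_le_sum fun e (_ : e ∈ Finset.univ) => key e
  rw [Finset.sum_add_distrib, Finset.sum_add_distrib, ← Finset.mul_sum, ← Finset.mul_sum,
    Finset.sum_sub_distrib, hq0sum, hq1sum, sub_self, mul_zero, add_zero] at hS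
  have hT : 0 ≤ ∑ e, |q1 e - q0 e| := Finset.sum_nonneg fun e _ => abs_nonneg _
  refine hS.trans (mul_le_mul_of_nonneg_right ?_ hT)
  have hH : A - p1 * Real.log p1 = A + B := by ring
  rw [hH]
  nlinarith
end

section
/- Let ρ₀ and ρ₁ be n×n density matrices emitted with probabilities p₀ and p₁ respectively, where p₀, p₁ > 0 and p₀ + p₁ = 1 (no ordering assumed). For any POVM (E_e)_{e∈F} on ℂⁿ, with p(e|s) = Tr(E_e ρ_s) and p(e) = p₀ p(e|0) + p₁ p(e|1), the mutual information I(E;S) = ∑_{s∈{0,1}} ∑_e p_s p(e|s) log( p(e|s)/p(e) ) satisfies I(E;S) ≤ H(S) · ‖ρ₀ - ρ₁‖₁, where H(S) = -p₀ log p₀ - p₁ log p₁. -/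
/-!
Write `a e = Tr (E e ρ0)`, `b e = Tr (E e ρ1)`, which are nonnegative. The bound is proved outcome by
outcome: the `e`-th contribution to the mutual information is at most `H(S) * |a e - b e|`
(`outcome_contribution_le`). By symmetry let `b ≤ a`, and put `q = p0 * a + p1 * b`. Then `b ≤ q`, so
the `ρ1` term is nonpositive, while `q / a = (b / a) * 1 + (1 - b / a) * p0`, so concavity of `log`
gives `a * log (a / q) ≤ -(a - b) * log p0` (`mul_log_div_mix_le`).

It remains that `∑ e, |a e - b e| ≤ ‖ρ0 - ρ1‖₁`. Diagonalising `ρ0 - ρ1 = U * diag λ * Uᴴ`,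
`a e - b e = ∑ i, (Uᴴ * E e * U) i i * λ i`, and for every `i` the diagonal entries
`(Uᴴ * E e * U) i i` are nonnegative and sum to `1` over `e` (`sum_abs_trace_mul_le`).
-/

open scoped BigOperators ComplexOrder

/-- Concavity of `log` at the point `(p * a + (1 - p) * b) / a`, a convex combination of `1` and `p`
with weights `b / a` and `1 - b / a`. -/
lemma mul_log_div_mix_le {p r a b : ℝ} (hp : 0 < p) (hsum : p + r = 1) (hb : 0 ≤ b) (hba : b ≤ a) :
    a * Real.log (a / (p * a + r * b)) ≤ (a - b) * -Real.log p := by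
  rcases (hb.trans hba).eq_or_lt with rfl | ha
  · have : b = 0 := le_antisymm hba hb
    simp [this]
  have h := strictConcaveOn_log_Ioi.concaveOn.2 (Set.mem_Ioi.2 one_pos) (Set.mem_Ioi.2 hp)
    (div_nonneg hb ha.le) (sub_nonneg.2 ((div_le_one ha).2 hba)) (by ring)
  have hr : r = 1 - p := by linarith
  have hq : (b / a) • (1 : ℝ) + (1 - b / a) • p = (p * a + r * b) / a := by
    rw [hr]; simp only [smul_eq_mul]; field_simp; ring
  rw [hq] at h
  simp only [smul_eq_mul, Real.log_one, mul_zero, zero_add] at h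
  rw [← inv_div, Real.log_inv]
  have h2 := mul_le_mul_of_nonneg_left h ha.le
  have h3 : a * ((1 - b / a) * Real.log p) = (a - b) * Real.log p := by field_simp
  linarith

/-- The case `b ≤ a` of `outcome_contribution_le`, where only the entropy term of `p` is needed. -/
lemma outcome_contribution_le_of_le {p r a b : ℝ} (hp : 0 < p) (hr : 0 < r) (hsum : p + r = 1)
    (hb : 0 ≤ b) (hba : b ≤ a) :
    p * a * Real.log (a / (p * a + r * b)) + r * b * Real.log (b / (p * a + r * b)) ≤
      -(p * Real.log p) * |a - b| := by
  have h1 := mul_le_mul_of_nonneg_left (mul_log_div_mix_le hp hsum hb hba) hp.le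
  have hbq : b ≤ p * a + r * b := by
    have : r = 1 - p := by linarith
    subst this
    nlinarith
  have h2 : Real.log (b / (p * a + r * b)) ≤ 0 :=
    Real.log_nonpos (div_nonneg hb (hb.trans hbq)) (div_le_one_of_le₀ hbq (hb.trans hbq))
  have h3 := mul_nonpos_of_nonneg_of_nonpos (mul_nonneg hr.le hb) h2
  rw [abs_of_nonneg (sub_nonneg.2 hba)]
  linarith

lemma outcome_contribution_le {p r a b : ℝ} (hp : 0 < p) (hr : 0 < r) (hsum : p + r = 1)
    (ha : 0 ≤ a) (hb : 0 ≤ b) :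
    p * a * Real.log (a / (p * a + r * b)) + r * b * Real.log (b / (p * a + r * b)) ≤
      (-(p * Real.log p) - r * Real.log r) * |a - b| := by
  have hp' : 0 ≤ -(p * Real.log p) := by
    have := mul_nonpos_of_nonneg_of_nonpos hp.le (Real.log_nonpos hp.le (by linarith))
    linarith
  have hr' : 0 ≤ -(r * Real.log r) := by
    have := mul_nonpos_of_nonneg_of_nonpos hr.le (Real.log_nonpos hr.le (by linarith))
    linarith
  have hp2 := mul_nonneg hp' (abs_nonneg (a - b))
  have hr2 := mul_nonneg hr' (abs_nonneg (a - b))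
  rcases le_total b a with h | h
  · have := outcome_contribution_le_of_le hp hr hsum hb h
    linarith
  · have := outcome_contribution_le_of_le hr hp (by linarith) ha h
    rw [add_comm (r * b) (p * a), abs_sub_comm b a] at this
    linarith

section Trace

variable {ι : Type*} [Fintype ι] [DecidableEq ι]

/-- The diagonal of `M` in the eigenbasis of the Hermitian matrix `A`: the real numbers
`Re ⟨uᵢ, M uᵢ⟩`, with `uᵢ` the eigenvectors of `A`. -/
noncomputable def eigenDiag {A : Matrix ι ι ℂ} (hA : A.IsHermitian) (M : Matrix ι ι ℂ) (i : ι) : ℝ :=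
  ((star (hA.eigenvectorUnitary : Matrix ι ι ℂ) * M * hA.eigenvectorUnitary) i i).re

lemma eigenDiag_nonneg {A M : Matrix ι ι ℂ} (hA : A.IsHermitian) (hM : M.PosSemidef) (i : ι) :
    0 ≤ eigenDiag hA M i := by
  have h := (hM.conjTranspose_mul_mul_same (hA.eigenvectorUnitary : Matrix ι ι ℂ)).diag_nonneg (i := i)
  exact (Complex.le_def.1 h).1

lemma sum_eigenDiag {F : Type*} [Fintype F] {A : Matrix ι ι ℂ} (hA : A.IsHermitian)
    (E : F → Matrix ι ι ℂ) (hE : ∑ e, E e = 1) (i : ι) : ∑ e, eigenDiag hA (E e) i = 1 := by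
  unfold eigenDiag
  rw [← Complex.re_sum, ← Matrix.sum_apply, ← Finset.sum_mul, ← Finset.mul_sum, hE, mul_one,
    Unitary.coe_star_mul_self]
  simp

lemma trace_mul_re_eq {A : Matrix ι ι ℂ} (hA : A.IsHermitian) (M : Matrix ι ι ℂ) :
    (M * A).trace.re = ∑ i, eigenDiag hA M i * hA.eigenvalues i := by
  conv_lhs => rw [hA.spectral_theorem, Unitary.conjStarAlgAut_apply]
  rw [← mul_assoc, ← mul_assoc, Matrix.trace_mul_comm, ← mul_assoc, ← mul_assoc, Matrix.trace,
    Complex.re_sum]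
  refine Finset.sum_congr rfl fun i _ => ?_
  simp [eigenDiag, Matrix.mul_diagonal]

lemma trace_mul_re_nonneg {A M : Matrix ι ι ℂ} (hA : A.PosSemidef) (hM : M.PosSemidef) :
    0 ≤ (M * A).trace.re := by
  rw [trace_mul_re_eq hA.isHermitian]
  exact Finset.sum_nonneg fun i _ => mul_nonneg (eigenDiag_nonneg _ hM i) (hA.eigenvalues_nonneg i)

/-- Measuring a Hermitian matrix with a POVM does not increase the trace norm. -/
lemma sum_abs_trace_mul_le {F : Type*} [Fintype F] {A : Matrix ι ι ℂ} (hA : A.IsHermitian)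
    (E : F → Matrix ι ι ℂ) (hE : ∀ e, (E e).PosSemidef) (hEsum : ∑ e, E e = 1) :
    ∑ e, |(E e * A).trace.re| ≤ traceNorm A := by
  have hnorm : traceNorm A = ∑ i, |hA.eigenvalues i| := by simp [traceNorm, hA]
  calc ∑ e, |(E e * A).trace.re|
      ≤ ∑ e, ∑ i, eigenDiag hA (E e) i * |hA.eigenvalues i| := by
        refine Finset.sum_le_sum fun e _ => ?_
        rw [trace_mul_re_eq hA]
        refine (Finset.abs_sum_le_sum_abs _ _).trans_eq (Finset.sum_congr rfl fun i _ => ?_)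
        rw [abs_mul, abs_of_nonneg (eigenDiag_nonneg hA (hE e) i)]
    _ = traceNorm A := by
        rw [Finset.sum_comm, hnorm]
        refine Finset.sum_congr rfl fun i _ => ?_
        rw [← Finset.sum_mul, sum_eigenDiag hA E hEsum, one_mul]

end Trace

/-- For density matrices `ρ₀, ρ₁` emitted with probabilities
`p₀, p₁ > 0` with `p₀ + p₁ = 1` (no ordering assumed) and any POVM `(E_e)`, with `p(e|s) = Tr(E_e ρ_s)`
and `p(e) = p₀ p(e|0) + p₁ p(e|1)`, the mutual information satisfies
`I(E;S) ≤ H(S) ‖ρ₀ - ρ₁‖₁` with `H(S) = -p₀ log p₀ - p₁ log p₁`. -/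
theorem binary_quantum_mutual_info_bound_unordered {n : ℕ} {F : Type*} [Fintype F]
    (p0 p1 : ℝ) (hp0pos : 0 < p0) (hp1pos : 0 < p1) (hsum : p0 + p1 = 1)
    (ρ0 ρ1 : Matrix (Fin n) (Fin n) ℂ)
    (hρ0 : ρ0.PosSemidef) (hρ1 : ρ1.PosSemidef)
    (hρ0tr : ρ0.trace = 1) (hρ1tr : ρ1.trace = 1)
    (E : F → Matrix (Fin n) (Fin n) ℂ)
    (hE : ∀ e, (E e).PosSemidef) (hEsum : ∑ e, E e = 1) :
    (∑ e, p0 * ((E e * ρ0).trace).re *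
        Real.log (((E e * ρ0).trace).re /
          (p0 * ((E e * ρ0).trace).re + p1 * ((E e * ρ1).trace).re)) +
      ∑ e, p1 * ((E e * ρ1).trace).re *
        Real.log (((E e * ρ1).trace).re /
          (p0 * ((E e * ρ0).trace).re + p1 * ((E e * ρ1).trace).re))) ≤
      (-(p0 * Real.log p0) - p1 * Real.log p1) * traceNorm (ρ0 - ρ1) := by
  have hH : 0 ≤ -(p0 * Real.log p0) - p1 * Real.log p1 := by
    have h0 := mul_nonpos_of_nonneg_of_nonpos hp0pos.le (Real.log_nonpos hp0pos.le (by linarith))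
    have h1 := mul_nonpos_of_nonneg_of_nonpos hp1pos.le (Real.log_nonpos hp1pos.le (by linarith))
    linarith
  have htr := sum_abs_trace_mul_le (hρ0.isHermitian.sub hρ1.isHermitian) E hE hEsum
  refine le_trans ?_ (mul_le_mul_of_nonneg_left htr hH)
  rw [← Finset.sum_add_distrib, Finset.mul_sum]
  refine Finset.sum_le_sum fun e _ => ?_
  rw [mul_sub, Matrix.trace_sub, Complex.sub_re]
  exact outcome_contribution_le hp0pos hp1pos hsum (trace_mul_re_nonneg hρ0 (hE e))
    (trace_mul_re_nonneg hρ1 (hE e))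
end

section
/- Let ρ and σ be density matrices on ℂ^m ⊗ ℂ^n, represented as (m·n)×(m·n) complex matrices indexed by pairs, and define their partial traces over the second factor entrywise by (Tr₂ M)(i,j) = ∑_{k=1}^n M((i,k),(j,k)). Then ‖Tr₂ ρ - Tr₂ σ‖₁ ≤ ‖ρ - σ‖₁, i.e., the trace norm distance is non-increasing under partial trace. -/
/-!
A Hermitian matrix `A` satisfies `‖A‖₁ ≤ Tr P + Tr Q` for every decomposition `A = P - Q` with `P`
and `Q` positive semidefinite (`traceNorm_le_of_eq_sub`), and equality is attained by the positive
and negative parts of `A` (`exists_posSemidef_sub`). The partial trace is linear, preserves traces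
and maps positive semidefinite matrices to positive semidefinite ones, so it sends the optimal
decomposition of `ρ - σ` to a decomposition of `Tr₂ ρ - Tr₂ σ` with the same total trace.
-/

open scoped BigOperators ComplexOrder

/-- The partial trace over the second subsystem: for a matrix `M` indexed by
`(Fin m × Fin n)`, `(Tr₂ M) i j = ∑ k, M (i,k) (j,k)`. -/
noncomputable def ptrace2 {m n : ℕ}
    (M : Matrix (Fin m × Fin n) (Fin m × Fin n) ℂ) : Matrix (Fin m) (Fin m) ℂ :=
  Matrix.of fun i j => ∑ k, M (i, k) (j, k)

open Matrix

lemma traceNorm_of_isHermitian {ι : Type*} [Fintype ι] [DecidableEq ι]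
    {A : Matrix ι ι ℂ} (h : A.IsHermitian) : traceNorm A = ∑ i, |h.eigenvalues i| := by
  unfold traceNorm
  exact dif_pos h

/-- In an eigenbasis of `P - Q` the eigenvalues are differences of the (nonnegative) diagonal
entries of `P` and `Q`, and these diagonal entries sum to the traces. -/
lemma traceNorm_le_of_eq_sub {ι : Type*} [Fintype ι] [DecidableEq ι]
    {A P Q : Matrix ι ι ℂ} (hP : P.PosSemidef) (hQ : Q.PosSemidef) (hA : A = P - Q) :
    traceNorm A ≤ P.trace.re + Q.trace.re := by
  have h : A.IsHermitian := hA ▸ hP.isHermitian.sub hQ.isHermitian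
  rw [traceNorm_of_isHermitian h]
  set U : Matrix ι ι ℂ := (h.eigenvectorUnitary : Matrix ι ι ℂ) with hU
  have hUU : U * Uᴴ = 1 := (Matrix.mem_unitaryGroup_iff).1 h.eigenvectorUnitary.2
  have hUU' : Uᴴ * U = 1 := (Matrix.mem_unitaryGroup_iff').1 h.eigenvectorUnitary.2
  have hspec : A = U * diagonal (fun i => (h.eigenvalues i : ℂ)) * Uᴴ := by
    have := h.spectral_theorem
    rw [Unitary.conjStarAlgAut_apply] at this
    exact this
  have htr (M : Matrix ι ι ℂ) : M.trace.re = ∑ i, ((Uᴴ * M * U) i i).re := by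
    have : M.trace = (Uᴴ * M * U).trace := by
      rw [Matrix.trace_mul_comm, ← Matrix.mul_assoc, hUU, Matrix.one_mul]
    rw [this, Matrix.trace, Complex.re_sum]
    rfl
  have hdiag : Uᴴ * A * U = diagonal (fun i => (h.eigenvalues i : ℂ)) := by
    calc Uᴴ * A * U
        = Uᴴ * (U * diagonal (fun i => (h.eigenvalues i : ℂ)) * Uᴴ) * U := by rw [← hspec]
      _ = (Uᴴ * U) * diagonal (fun i => (h.eigenvalues i : ℂ)) * (Uᴴ * U) := by
          simp only [Matrix.mul_assoc]
      _ = _ := by rw [hUU', Matrix.one_mul, Matrix.mul_one]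
  rw [htr P, htr Q, ← Finset.sum_add_distrib]
  refine Finset.sum_le_sum fun i _ => ?_
  have hp : 0 ≤ ((Uᴴ * P * U) i i).re :=
    (Complex.le_def.1 ((hP.conjTranspose_mul_mul_same U).diag_nonneg (i := i))).1
  have hq : 0 ≤ ((Uᴴ * Q * U) i i).re :=
    (Complex.le_def.1 ((hQ.conjTranspose_mul_mul_same U).diag_nonneg (i := i))).1
  have he : h.eigenvalues i = ((Uᴴ * P * U) i i).re - ((Uᴴ * Q * U) i i).re := by
    have h1 : Uᴴ * P * U - Uᴴ * Q * U = diagonal (fun i => (h.eigenvalues i : ℂ)) := by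
      rw [← hdiag, ← Matrix.sub_mul, ← Matrix.mul_sub, hA]
    have h2 := congrArg Complex.re (congrFun (congrFun h1 i) i)
    simpa using h2.symm
  rw [he, abs_le]
  constructor <;> linarith

/-- The positive and negative parts of a Hermitian matrix, obtained by applying `λ ↦ λ⁺` and
`λ ↦ λ⁻` to the eigenvalues. -/
lemma exists_posSemidef_sub {ι : Type*} [Fintype ι] [DecidableEq ι]
    {A : Matrix ι ι ℂ} (h : A.IsHermitian) :
    ∃ P Q : Matrix ι ι ℂ, P.PosSemidef ∧ Q.PosSemidef ∧ A = P - Q ∧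
      P.trace.re + Q.trace.re = traceNorm A := by
  rw [traceNorm_of_isHermitian h]
  set U : Matrix ι ι ℂ := (h.eigenvectorUnitary : Matrix ι ι ℂ) with hU
  have hUU' : Uᴴ * U = 1 := (Matrix.mem_unitaryGroup_iff').1 h.eigenvectorUnitary.2
  have hspec : A = U * diagonal (fun i => (h.eigenvalues i : ℂ)) * Uᴴ := by
    have := h.spectral_theorem
    rw [Unitary.conjStarAlgAut_apply] at this
    exact this
  have hpos (d : ι → ℝ) (hd : ∀ i, 0 ≤ d i) :
      (U * diagonal (fun i => (d i : ℂ)) * Uᴴ).PosSemidef :=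
    (PosSemidef.diagonal fun i => by simpa using hd i).mul_mul_conjTranspose_same U
  have htr (d : ι → ℝ) : (U * diagonal (fun i => (d i : ℂ)) * Uᴴ).trace.re = ∑ i, d i := by
    rw [Matrix.trace_mul_comm, ← Matrix.mul_assoc, hUU', Matrix.one_mul, Matrix.trace_diagonal,
      Complex.re_sum]
    simp
  refine ⟨_, _, hpos (fun i => (h.eigenvalues i)⁺) fun i => posPart_nonneg _,
    hpos (fun i => (h.eigenvalues i)⁻) fun i => negPart_nonneg _, ?_, ?_⟩
  · rw [← Matrix.sub_mul, ← Matrix.mul_sub, Matrix.diagonal_sub]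
    simp only [← Complex.ofReal_sub, posPart_sub_negPart]
    exact hspec
  · rw [htr, htr, ← Finset.sum_add_distrib]
    simp only [posPart_add_negPart]

lemma ptrace2_sub {m n : ℕ} (M N : Matrix (Fin m × Fin n) (Fin m × Fin n) ℂ) :
    ptrace2 (M - N) = ptrace2 M - ptrace2 N := by
  ext i j
  simp [ptrace2]

lemma trace_ptrace2 {m n : ℕ} (M : Matrix (Fin m × Fin n) (Fin m × Fin n) ℂ) :
    (ptrace2 M).trace = M.trace := by
  simp [ptrace2, Matrix.trace, Fintype.sum_prod_type]

/-- The partial trace is a sum of principal submatrices. -/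
lemma posSemidef_ptrace2 {m n : ℕ} {M : Matrix (Fin m × Fin n) (Fin m × Fin n) ℂ}
    (hM : M.PosSemidef) : (ptrace2 M).PosSemidef := by
  have : ptrace2 M = ∑ k : Fin n, M.submatrix (fun i => (i, k)) (fun i => (i, k)) := by
    ext i j
    simp [ptrace2, Matrix.sum_apply]
  rw [this]
  exact posSemidef_sum _ fun k _ => hM.submatrix _

/-- For density matrices `ρ, σ` on `ℂ^m ⊗ ℂ^n`, the trace
norm distance is non-increasing under the partial trace over the second factor:
`‖Tr₂ ρ - Tr₂ σ‖₁ ≤ ‖ρ - σ‖₁`. -/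
theorem traceNorm_ptrace2_le {m n : ℕ}
    (ρ σ : Matrix (Fin m × Fin n) (Fin m × Fin n) ℂ)
    (hρ : ρ.PosSemidef) (hσ : σ.PosSemidef)
    (hρtr : ρ.trace = 1) (hσtr : σ.trace = 1) :
    traceNorm (ptrace2 ρ - ptrace2 σ) ≤ traceNorm (ρ - σ) := by
  obtain ⟨P, Q, hP, hQ, hPQ, htr⟩ := exists_posSemidef_sub (hρ.isHermitian.sub hσ.isHermitian)
  rw [← htr, ← trace_ptrace2 P, ← trace_ptrace2 Q]
  exact traceNorm_le_of_eq_sub (posSemidef_ptrace2 hP) (posSemidef_ptrace2 hQ)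
    (by rw [← ptrace2_sub, ← ptrace2_sub, hPQ])
end
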